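/- Under Assumption (A): if {h^ε}_{0<ε≤ε₀} ∈ 𝓑_V and h^ε → h pointwise on ℤ as ε → 0⁺, then for each t and each x ∈ ℤ, Λ^ε_t(x,u;h^ε) converges to Λ_t(x,u;h) uniformly in u on every compact subset of U; equivalently, for every x, every sequence ε_n → 0⁺ and every convergent sequence u^{ε_n} → u in U, lim_{n→∞} Λ^{ε_n}_t(x,u^{ε_n};h^{ε_n}) = Λ_t(x,u;h). -/

import Mathlib

open Filter Topology

/-- The setup for a countable-stated (here `ℤ`-stated) risk-sensitive MDP with horizon `T`,
transition kernels `q ε t · x u` (for `0 < ε ≤ eps0`), rate functions `I`, running costs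
`f τ t x u` and terminal costs `g τ x`.  The Lyapunov function `V` is positive and inf-finite. -/
structure RSSetup (U : Type*) [MetricSpace U] where
  T : ℕ
  eps0 : ℝ
  eps0_pos : 0 < eps0
  V : ℤ → ℝ
  V_pos : ∀ x, 0 < V x
  V_infFinite : ∀ K : ℝ, {x : ℤ | V x ≤ K}.Finite
  q : ℝ → ℕ → ℤ → U → ℤ → ℝ
  q_nonneg : ∀ ε ∈ Set.Ioc (0 : ℝ) eps0, ∀ t ∈ Finset.Icc 1 T, ∀ (x : ℤ) (u : U) (z : ℤ),
    0 ≤ q ε t x u z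
  q_pmf : ∀ ε ∈ Set.Ioc (0 : ℝ) eps0, ∀ t ∈ Finset.Icc 1 T, ∀ (x : ℤ) (u : U),
    HasSum (q ε t x u) 1
  I : ℕ → ℤ → U → ℤ → ENNReal
  I_subfin : ∀ (t : ℕ) (x : ℤ) (u : U) (K : ENNReal), K ≠ ⊤ → {z : ℤ | I t x u z ≤ K}.Finite
  f : ℕ → ℕ → ℤ → U → ℝ
  g : ℕ → ℤ → ℝ

namespace RSSetup

variable {U : Type*} [MetricSpace U]

/-- `Λ^ε_t(x,u;h) = ε log ∑_z exp(h(z)/ε) q^ε_t(z;x,u)`. -/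
noncomputable def lamE (S : RSSetup U) (ε : ℝ) (t : ℕ) (x : ℤ) (u : U) (h : ℤ → ℝ) : ℝ :=
  ε * Real.log (∑' z : ℤ, Real.exp (h z / ε) * S.q ε t x u z)

/-- `Λ_t(x,u;h) = sup_z [h(z) - I_t(z;x,u)]` (the supremum being over the points where the
rate function is finite). -/
noncomputable def lam (S : RSSetup U) (t : ℕ) (x : ℤ) (u : U) (h : ℤ → ℝ) : ℝ :=
  sSup ((fun z => h z - (S.I t x u z).toReal) '' {z : ℤ | S.I t x u z ≠ ⊤})

/-- Membership in `B_V`: bounded below and `|h(x)|/V(x) → 0` as `|x| → ∞`. -/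
def memBV (S : RSSetup U) (h : ℤ → ℝ) : Prop :=
  BddBelow (Set.range h) ∧
    Tendsto (fun x : ℤ => |h x| / S.V x) Filter.cofinite (nhds 0)

/-- The pointwise supremum `x ↦ sup_{0<ε≤ε₀} h^ε(x)` of a family. -/
noncomputable def supFam (S : RSSetup U) (h : ℝ → ℤ → ℝ) : ℤ → ℝ :=
  fun x => sSup ((fun ε => h ε x) '' Set.Ioc (0 : ℝ) S.eps0)

/-- Membership of a family `{h^ε}_{0<ε≤ε₀}` in `𝓑_V`: each member is in `B_V`, the family is
uniformly bounded below, and the pointwise supremum `sup_ε h^ε` belongs to `B_V`. -/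
def memFam (S : RSSetup U) (h : ℝ → ℤ → ℝ) : Prop :=
  (∀ ε ∈ Set.Ioc (0 : ℝ) S.eps0, S.memBV (h ε)) ∧
  (∃ c : ℝ, ∀ ε ∈ Set.Ioc (0 : ℝ) S.eps0, ∀ x, c ≤ h ε x) ∧
  (∀ x, BddAbove ((fun ε => h ε x) '' Set.Ioc (0 : ℝ) S.eps0)) ∧
  S.memBV (S.supFam h)

/-- Assumption (A) with parameter `λ₀`. -/
def AssumptionA (S : RSSetup U) (lam0 : ℝ) : Prop :=
  0 < lam0 ∧
  -- (A1): `sup_{0<ε≤ε₀} Λ^ε_t(x,u;λ₀ V) < ∞` (in particular the defining sums converge)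
  (∀ t ∈ Finset.Icc 1 S.T, ∀ (x : ℤ) (u : U),
    (∀ ε ∈ Set.Ioc (0 : ℝ) S.eps0,
      Summable fun z : ℤ => Real.exp (lam0 * S.V z / ε) * S.q ε t x u z) ∧
    ∃ C : ℝ, ∀ ε ∈ Set.Ioc (0 : ℝ) S.eps0, S.lamE ε t x u (fun z => lam0 * S.V z) ≤ C) ∧
  -- (A2): continuity in `u`, and `Λ^ε_t(x,u^ε;h) → Λ_t(x,u;h)` whenever `u^ε → u`
  (∀ t ∈ Finset.Icc 1 S.T, ∀ x : ℤ, ∀ h : ℤ → ℝ, S.memBV h →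
    (∀ ε ∈ Set.Ioc (0 : ℝ) S.eps0, Continuous fun u : U => S.lamE ε t x u h) ∧
    (∀ (u : U) (uu : ℝ → U), Tendsto uu (nhdsWithin 0 (Set.Ioi 0)) (nhds u) →
      Tendsto (fun ε => S.lamE ε t x (uu ε) h) (nhdsWithin 0 (Set.Ioi 0))
        (nhds (S.lam t x u h)))) ∧
  -- (A3): `limsup_{|x|→∞} sup_{0<ε≤ε₀} Λ^ε_t(x,u;λV)/(λV(x)) < K_u` for `λ ∈ (0,λ₀)`
  (∀ t ∈ Finset.Icc 1 S.T, ∀ u : U, ∃ Ku : ℝ, ∀ lam' ∈ Set.Ioo (0 : ℝ) lam0,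
    ∃ c < Ku, ∀ᶠ x in (Filter.cofinite : Filter ℤ), ∀ ε ∈ Set.Ioc (0 : ℝ) S.eps0,
      S.lamE ε t x u (fun z => lam' * S.V z) ≤ c * (lam' * S.V x))

/-- Assumption (B). -/
def AssumptionB (S : RSSetup U) : Prop :=
  (∀ τ ∈ Finset.Icc 1 S.T, ∀ t ∈ Finset.Icc 1 S.T, ∀ u : U,
    S.memBV fun x => S.f τ t x u) ∧
  (∀ τ ∈ Finset.Icc 1 S.T, S.memBV (S.g τ)) ∧
  (∀ t ∈ Finset.Icc 1 S.T, ∀ x : ℤ, Continuous fun u : U => S.f t t x u) ∧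
  (∀ t ∈ Finset.Icc 1 S.T, ∀ x : ℤ, ∀ K : ℝ, IsCompact {u : U | S.f t t x u ≤ K})

/-- Assumption (C) with parameter `λ₀`: growth conditions over the sublevel sets
`B_{t,λ}(x) = {u : f_{t,t}(x,u) ≤ λ V(x)}`. -/
def AssumptionC (S : RSSetup U) (lam0 : ℝ) : Prop :=
  0 < lam0 ∧ ∃ K1 : ℝ,
    ∀ lam' ∈ Set.Ioo (0 : ℝ) lam0, ∀ τ ∈ Finset.Icc 1 S.T, ∀ t ∈ Finset.Icc 1 S.T,
      (∀ c > K1, ∀ᶠ x in (Filter.cofinite : Filter ℤ), ∀ u : U,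
        S.f t t x u ≤ lam' * S.V x → S.f τ t x u ≤ c * (lam' * S.V x)) ∧
      (∀ c > K1, ∀ᶠ x in (Filter.cofinite : Filter ℤ), ∀ ε ∈ Set.Ioo (0 : ℝ) S.eps0, ∀ u : U,
        S.f t t x u ≤ lam' * S.V x →
          S.lamE ε t x u (fun z => lam' * S.V z) ≤ c * (lam' * S.V x))

/-- The cost `J^ε_{τ,t}(x;π)` of a Markov policy `π`, defined backward from
`J^ε_{τ,T+1} = g_τ`. -/
noncomputable def Jeps (S : RSSetup U) (ε : ℝ) (π : ℕ → ℤ → U) (τ t : ℕ) : ℤ → ℝ :=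
  if h : S.T + 1 ≤ t then S.g τ
  else fun x => S.f τ t x (π t x) + S.lamE ε t x (π t x) (S.Jeps ε π τ (t + 1))
termination_by S.T + 1 - t
decreasing_by omega

/-- The limit cost `J_{τ,t}(x;π)` of a Markov policy `π`, defined backward from
`J_{τ,T+1} = g_τ`. -/
noncomputable def Jlim (S : RSSetup U) (π : ℕ → ℤ → U) (τ t : ℕ) : ℤ → ℝ :=
  if h : S.T + 1 ≤ t then S.g τ
  else fun x => S.f τ t x (π t x) + S.lam t x (π t x) (S.Jlim π τ (t + 1))
termination_by S.T + 1 - t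
decreasing_by omega

/-- `(η, Θ)` solves the `ε`-recursion system. -/
def SolvesEpsSystem (S : RSSetup U) (ε : ℝ) (η : ℕ → ℤ → U) (Θ : ℕ → ℕ → ℤ → ℝ) : Prop :=
  (∀ τ ∈ Finset.Icc 1 S.T, Θ τ (S.T + 1) = S.g τ) ∧
  (∀ t ∈ Finset.Icc 1 S.T, ∀ (x : ℤ) (u : U),
    S.f t t x (η t x) + S.lamE ε t x (η t x) (Θ t (t + 1)) ≤
      S.f t t x u + S.lamE ε t x u (Θ t (t + 1))) ∧
  (∀ τ ∈ Finset.Icc 1 S.T, ∀ t ∈ Finset.Icc 1 S.T, ∀ x : ℤ,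
    Θ τ t x = S.f τ t x (η t x) + S.lamE ε t x (η t x) (Θ τ (t + 1)))

/-- `(η, Θ)` solves the limit recursion system. -/
def SolvesLimSystem (S : RSSetup U) (η : ℕ → ℤ → U) (Θ : ℕ → ℕ → ℤ → ℝ) : Prop :=
  (∀ τ ∈ Finset.Icc 1 S.T, Θ τ (S.T + 1) = S.g τ) ∧
  (∀ t ∈ Finset.Icc 1 S.T, ∀ (x : ℤ) (u : U),
    S.f t t x (η t x) + S.lam t x (η t x) (Θ t (t + 1)) ≤
      S.f t t x u + S.lam t x u (Θ t (t + 1))) ∧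
  (∀ τ ∈ Finset.Icc 1 S.T, ∀ t ∈ Finset.Icc 1 S.T, ∀ x : ℤ,
    Θ τ t x = S.f τ t x (η t x) + S.lam t x (η t x) (Θ τ (t + 1)))

/-- `π` is a time-inconsistent `ε`-risk-sensitive equilibrium. -/
def IsEpsEquilibrium (S : RSSetup U) (ε : ℝ) (π : ℕ → ℤ → U) : Prop :=
  ∀ t ∈ Finset.Icc 1 S.T, ∀ (x : ℤ) (u : U),
    S.Jeps ε π t t x ≤ S.f t t x u + S.lamE ε t x u (S.Jeps ε π t (t + 1))

/-- `π` is a time-inconsistent risk-sensitive equilibrium for the limit cost. -/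
def IsLimEquilibrium (S : RSSetup U) (π : ℕ → ℤ → U) : Prop :=
  ∀ t ∈ Finset.Icc 1 S.T, ∀ (x : ℤ) (u : U),
    S.Jlim π t t x ≤ S.f t t x u + S.lam t x u (S.Jlim π t (t + 1))

end RSSetup

/-! helpers for the proof -/

namespace RSSetup

variable {U : Type*} [MetricSpace U]

theorem aux_V_atTop (S : RSSetup U) : Tendsto S.V cofinite atTop := by
  rw [tendsto_atTop]
  intro b
  rw [Filter.eventually_cofinite]
  refine (S.V_infFinite b).subset ?_
  intro x hx
  simp only [Set.mem_setOf_eq, not_le] at hx ⊢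
  exact hx.le

theorem aux_memBV_of_le (S : RSSetup U) {H g : ℤ → ℝ} (hH : S.memBV H) (a b c : ℝ)
    (hc : ∀ z, c ≤ g z) (hg : ∀ z, |g z| ≤ a * |H z| + b) : S.memBV g := by
  refine ⟨⟨c, by rintro _ ⟨z, rfl⟩; exact hc z⟩, ?_⟩
  have h1 : Tendsto (fun z => a * (|H z| / S.V z) + b / S.V z) cofinite (nhds 0) := by
    have := (hH.2.const_mul a).add ((S.aux_V_atTop).const_div_atTop b)
    simpa using this
  refine squeeze_zero (fun z => div_nonneg (abs_nonneg _) (S.V_pos z).le) ?_ h1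
  intro z
  rw [← mul_div_assoc, ← add_div]
  exact div_le_div_of_nonneg_right (hg z) (S.V_pos z).le

theorem aux_summable (S : RSSetup U) {lam0 : ℝ} (hA : S.AssumptionA lam0) {g : ℤ → ℝ}
    (hg : S.memBV g) {t : ℕ} (ht : t ∈ Finset.Icc 1 S.T) (x : ℤ) (u : U) {ε : ℝ}
    (hε : ε ∈ Set.Ioc (0 : ℝ) S.eps0) :
    Summable fun z : ℤ => Real.exp (g z / ε) * S.q ε t x u z := by
  have h1 := (hA.2.1 t ht x u).1 ε hε
  refine Summable.of_norm_bounded_eventually h1 ?_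
  filter_upwards [hg.2.eventually_lt_const hA.1] with z hz
  have hq := S.q_nonneg ε hε t ht x u z
  rw [Real.norm_of_nonneg (mul_nonneg (Real.exp_pos _).le hq)]
  refine mul_le_mul_of_nonneg_right (Real.exp_le_exp.2 ?_) hq
  refine div_le_div_of_nonneg_right ?_ hε.1.le
  rw [div_lt_iff₀ (S.V_pos z)] at hz
  exact (le_abs_self _).trans hz.le

theorem aux_mono (S : RSSetup U) {lam0 : ℝ} (hA : S.AssumptionA lam0) {g k : ℤ → ℝ}
    (hg : S.memBV g) (hk : S.memBV k) (hle : ∀ z, k z ≤ g z)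
    {t : ℕ} (ht : t ∈ Finset.Icc 1 S.T) (x : ℤ) (u : U) {ε : ℝ}
    (hε : ε ∈ Set.Ioc (0 : ℝ) S.eps0) :
    S.lamE ε t x u k ≤ S.lamE ε t x u g := by
  have sg := S.aux_summable hA hg ht x u hε
  have sk := S.aux_summable hA hk ht x u hε
  have hq := S.q_nonneg ε hε t ht x u
  obtain ⟨z0, hz0⟩ : ∃ z, 0 < S.q ε t x u z := by
    by_contra hcon
    push Not at hcon
    have h0 : S.q ε t x u = fun _ => 0 := by
      funext z
      exact le_antisymm (hcon z) (hq z)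
    have h1 := S.q_pmf ε hε t ht x u
    rw [h0] at h1
    exact zero_ne_one (hasSum_zero.unique h1)
  unfold lamE
  refine mul_le_mul_of_nonneg_left (Real.log_le_log ?_ ?_) hε.1.le
  · exact sk.tsum_pos (fun z => mul_nonneg (Real.exp_pos _).le (hq z)) z0
      (mul_pos (Real.exp_pos _) hz0)
  · refine sk.tsum_le_tsum (fun z => ?_) sg
    exact mul_le_mul_of_nonneg_right
      (Real.exp_le_exp.2 (div_le_div_of_nonneg_right (hle z) hε.1.le)) (hq z)

theorem aux_ev (S : RSSetup U) : ∀ᶠ ε in nhdsWithin (0 : ℝ) (Set.Ioi 0),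
    ε ∈ Set.Ioc (0 : ℝ) S.eps0 :=
  Ioc_mem_nhdsGT S.eps0_pos

theorem aux_le_lam (S : RSSetup U) {lam0 : ℝ} (hA : S.AssumptionA lam0) {g : ℤ → ℝ}
    (hg : S.memBV g) {t : ℕ} (ht : t ∈ Finset.Icc 1 S.T) (x : ℤ) (u : U) (z : ℤ)
    (hz : S.I t x u z ≠ ⊤) : g z - (S.I t x u z).toReal ≤ S.lam t x u g := by
  classical
  obtain ⟨c, hc⟩ := hg.1
  have hc' : ∀ w, c ≤ g w := fun w => hc ⟨w, rfl⟩
  let k : ℤ → ℝ := fun w => if w = z then g z else c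
  have hck : ∀ w, c ≤ k w := by
    intro w
    by_cases hw : w = z
    · simp [k, hw, hc']
    · simp [k, hw]
  have hkz : ∀ w, k w ≤ g z := by
    intro w
    by_cases hw : w = z
    · simp [k, hw]
    · simp [k, hw, hc']
  have hkg : ∀ w, k w ≤ g w := by
    intro w
    by_cases hw : w = z
    · simp [k, hw]
    · simp [k, hw, hc']
  have hk : S.memBV k := by
    refine S.aux_memBV_of_le hg 0 (|g z| + |c|) c hck ?_
    intro w
    rw [abs_le]
    have := hck w
    have := hkz w
    have := neg_abs_le c
    have := le_abs_self (g z)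
    have := abs_nonneg c
    have := abs_nonneg (g z)
    constructor <;> linarith
  have h1 : S.lam t x u k ≤ S.lam t x u g := by
    refine le_of_tendsto_of_tendsto ((hA.2.2.1 t ht x k hk).2 u (fun _ => u) tendsto_const_nhds)
      ((hA.2.2.1 t ht x g hg).2 u (fun _ => u) tendsto_const_nhds) ?_
    filter_upwards [S.aux_ev] with ε hε
    exact S.aux_mono hA hg hk hkg ht x u hε
  refine le_trans ?_ h1
  refine le_csSup ?_ ⟨z, hz, by simp [k]⟩
  refine ⟨g z, ?_⟩
  rintro _ ⟨w, -, rfl⟩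
  have := hkz w
  have : 0 ≤ (S.I t x u w).toReal := ENNReal.toReal_nonneg
  dsimp only
  linarith

theorem aux_nonempty (S : RSSetup U) {lam0 : ℝ} (hA : S.AssumptionA lam0) (H : ℤ → ℝ)
    (hH : S.memBV H) {t : ℕ} (ht : t ∈ Finset.Icc 1 S.T) (x : ℤ) (u : U) :
    {z : ℤ | S.I t x u z ≠ ⊤}.Nonempty := by
  by_contra hne
  rw [Set.not_nonempty_iff_eq_empty] at hne
  have h1 : S.memBV (fun _ => (1 : ℝ)) :=
    S.aux_memBV_of_le hH 0 1 1 (fun _ => le_rfl) (fun _ => by simp)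
  have h2 := (hA.2.2.1 t ht x _ h1).2 u (fun _ => u) tendsto_const_nhds
  have h3 : S.lam t x u (fun _ => (1 : ℝ)) = 0 := by
    unfold lam
    rw [hne]
    simp
  rw [h3] at h2
  have h4 : Tendsto (fun ε => S.lamE ε t x u (fun _ => (1 : ℝ)))
      (nhdsWithin (0 : ℝ) (Set.Ioi 0)) (nhds 1) := by
    refine tendsto_const_nhds.congr' ?_
    filter_upwards [S.aux_ev] with ε hε
    unfold lamE
    rw [tsum_mul_left, (S.q_pmf ε hε t ht x u).tsum_eq, mul_one, Real.log_exp]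
    field_simp [hε.1.ne']
  exact zero_ne_one (tendsto_nhds_unique h2 h4)

theorem aux_seq {F : ℝ → U → ℝ} {u : U} {L : ℝ}
    (hF : ∀ uu : ℝ → U, Tendsto uu (nhdsWithin 0 (Set.Ioi 0)) (nhds u) →
      Tendsto (fun ε => F ε (uu ε)) (nhdsWithin 0 (Set.Ioi 0)) (nhds L))
    (εs : ℕ → ℝ) (hpos : ∀ n, 0 < εs n) (hε : Tendsto εs atTop (nhds 0))
    (us : ℕ → U) (hu : Tendsto us atTop (nhds u)) :
    Tendsto (fun n => F (εs n) (us n)) atTop (nhds L) := by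
  refine tendsto_of_subseq_tendsto ?_
  intro ns hns
  have h0 : Tendsto (fun n => εs (ns n)) atTop (nhdsWithin 0 (Set.Ioi 0)) :=
    tendsto_nhdsWithin_iff.2 ⟨hε.comp hns, Eventually.of_forall fun n => hpos _⟩
  have h1 : Tendsto (fun n => (εs (ns n))⁻¹) atTop atTop := tendsto_inv_nhdsGT_zero.comp h0
  obtain ⟨φ, hφ, hφ'⟩ := strictMono_subseq_of_tendsto_atTop h1
  refine ⟨φ, ?_⟩
  let e : ℕ → ℝ := fun n => εs (ns (φ n))
  have he : StrictAnti e := by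
    intro a b hab
    have := hφ' hab
    simp only [Function.comp] at this
    exact (inv_lt_inv₀ (hpos _) (hpos _)).1 this
  have hut : Tendsto (fun n => us (ns (φ n))) atTop (nhds u) :=
    hu.comp (hns.comp hφ.tendsto_atTop)
  let uu : ℝ → U := Function.extend e (fun n => us (ns (φ n))) (fun _ => u)
  have huu : Tendsto uu (nhdsWithin 0 (Set.Ioi 0)) (nhds u) := by
    intro s hs
    obtain ⟨N, hN⟩ := eventually_atTop.1 (hut.eventually hs)
    have : ∀ᶠ ε in nhdsWithin (0 : ℝ) (Set.Ioi 0), ε < e N :=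
      (eventually_lt_nhds (hpos _)).filter_mono nhdsWithin_le_nhds
    show ∀ᶠ ε in nhdsWithin (0 : ℝ) (Set.Ioi 0), uu ε ∈ s
    filter_upwards [this] with ε hεN
    by_cases hex : ∃ n, e n = ε
    · obtain ⟨n, rfl⟩ := hex
      have hn : uu (e n) = us (ns (φ n)) := he.injective.extend_apply _ _ _
      rw [hn]
      exact hN n (he.lt_iff_gt.1 hεN).le
    · have hn : uu ε = u := Function.extend_apply' _ _ _ hex
      rw [hn]
      exact mem_of_mem_nhds hs
  have h2 := (hF uu huu).comp (h0.comp hφ.tendsto_atTop)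
  refine h2.congr ?_
  intro n
  have hn : uu (e n) = us (ns (φ n)) := he.injective.extend_apply _ _ _
  show F (e n) (uu (e n)) = _
  rw [hn]

end RSSetup

/-- Under Assumption (A): if `{h^ε} ∈ 𝓑_V` and `h^ε → h` pointwise as
`ε → 0⁺`, then for each `t` and `x`, `Λ^ε_t(x,u;h^ε) → Λ_t(x,u;h)` uniformly in `u` on compact
subsets of `U`; in sequential form: for every `ε_n → 0⁺` in `(0,ε₀]` and every `u_n → u`,
`Λ^{ε_n}_t(x,u_n;h^{ε_n}) → Λ_t(x,u;h)`. -/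
theorem statement12 {U : Type*} [MetricSpace U] [CompleteSpace U]
    (S : RSSetup U) (lam0 : ℝ) (hA : S.AssumptionA lam0)
    (hfam : ℝ → ℤ → ℝ) (hmem : S.memFam hfam)
    (h : ℤ → ℝ)
    (hptw : ∀ x : ℤ, Filter.Tendsto (fun ε => hfam ε x)
      (nhdsWithin 0 (Set.Ioi 0)) (nhds (h x)))
    (t : ℕ) (ht : t ∈ Finset.Icc 1 S.T) (x : ℤ) :
    ∀ εs : ℕ → ℝ, (∀ n, εs n ∈ Set.Ioc (0 : ℝ) S.eps0) →
      Filter.Tendsto εs Filter.atTop (nhds 0) →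
      ∀ (us : ℕ → U) (u : U), Filter.Tendsto us Filter.atTop (nhds u) →
        Filter.Tendsto (fun n => S.lamE (εs n) t x (us n) (hfam (εs n)))
          Filter.atTop (nhds (S.lam t x u h)) := by
  classical
  intro εs hεs hε us u hu
  obtain ⟨hm1, ⟨c, hc⟩, hbdd, hH⟩ := hmem
  set H := S.supFam hfam with hHdef
  have hle : ∀ ε ∈ Set.Ioc (0 : ℝ) S.eps0, ∀ z, hfam ε z ≤ H z := by
    intro ε he z
    exact le_csSup (hbdd z) ⟨ε, he, rfl⟩
  have hch : ∀ z, c ≤ h z := fun z =>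
    ge_of_tendsto (hptw z) (S.aux_ev.mono fun ε he => hc ε he z)
  have hhH : ∀ z, h z ≤ H z := fun z =>
    le_of_tendsto (hptw z) (S.aux_ev.mono fun ε he => hle ε he z)
  have hcH : ∀ z, c ≤ H z := fun z => (hch z).trans (hhH z)
  have hB : S.memBV h := by
    refine S.aux_memBV_of_le hH 1 |c| c hch fun z => ?_
    rw [abs_le]
    have := hch z
    have := hhH z
    have := neg_abs_le c
    have := le_abs_self (H z)
    have := abs_nonneg c
    have := abs_nonneg (H z)
    constructor <;> linarith
  have hε0 : Tendsto εs atTop (nhdsWithin 0 (Set.Ioi 0)) :=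
    tendsto_nhdsWithin_iff.2 ⟨hε, Eventually.of_forall fun n => (hεs n).1⟩
  have key : ∀ g : ℤ → ℝ, S.memBV g → Tendsto (fun n => S.lamE (εs n) t x (us n) g) atTop
      (nhds (S.lam t x u g)) := fun g hg =>
    RSSetup.aux_seq (F := fun ε v => S.lamE ε t x v g) ((hA.2.2.1 t ht x g hg).2 u) εs
      (fun n => (hεs n).1) hε us hu
  have hne := S.aux_nonempty hA H hH ht x u
  set L := S.lam t x u h with hL
  rw [tendsto_order]
  constructor
  · intro a ha
    obtain ⟨δ, hδ, hδ2⟩ : ∃ δ : ℝ, 0 < δ ∧ a < L - 2 * δ :=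
      ⟨(L - a) / 4, by linarith, by linarith⟩
    obtain ⟨_, ⟨z0, hz0, rfl⟩, hz1⟩ := exists_lt_of_lt_csSup (hne.image _)
      (show L - δ < S.lam t x u h by linarith)
    dsimp only at hz1
    let k : ℤ → ℝ := fun w => if w = z0 then h z0 - δ else c - δ
    have hck : ∀ w, c - δ ≤ k w := by
      intro w
      have := hch z0
      by_cases hw : w = z0
      · simp only [k, hw, if_true]; linarith
      · simp [k, hw]
    have hkz : ∀ w, k w ≤ h z0 := by
      intro w
      have := hch z0
      by_cases hw : w = z0
      · simp only [k, hw, if_true]; linarith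
      · simp only [k, hw, if_false]; linarith
    have hk : S.memBV k := by
      refine S.aux_memBV_of_le hH 0 (|h z0| + |c - δ|) (c - δ) hck fun w => ?_
      rw [abs_le]
      have := hck w
      have := hkz w
      have := neg_abs_le (c - δ)
      have := le_abs_self (h z0)
      have := abs_nonneg (c - δ)
      have := abs_nonneg (h z0)
      constructor <;> linarith
    have h3 : a < S.lam t x u k := by
      have := S.aux_le_lam hA hk ht x u z0 hz0
      simp only [k, if_true] at this
      linarith
    have hev : ∀ᶠ n in atTop, h z0 - δ < hfam (εs n) z0 :=
      hε0.eventually ((hptw z0).eventually (lt_mem_nhds (by linarith)))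
    filter_upwards [hev, (key k hk).eventually (lt_mem_nhds h3)] with n hn1 hn2
    refine hn2.trans_le (S.aux_mono hA (hm1 _ (hεs n)) hk ?_ ht x (us n) (hεs n))
    intro w
    by_cases hw : w = z0
    · simp only [k, hw, if_true]; exact hn1.le
    · have := hc _ (hεs n) w
      simp only [k, hw, if_false]; linarith
  · intro a ha
    obtain ⟨δ, hδ, hδ2⟩ : ∃ δ : ℝ, 0 < δ ∧ L + δ < a :=
      ⟨(a - L) / 2, by linarith, by linarith⟩
    let G : ℤ → ℝ := fun z => 2 * |H z|
    have hG : S.memBV G := by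
      refine S.aux_memBV_of_le hH 2 0 0 (fun z => by positivity) fun z => ?_
      simp [G, abs_mul]
    set C := S.lam t x u G with hC
    let R : ℝ := max 0 (C - 2 * L)
    let E : Set ℤ := {z | S.I t x u z ≤ ENNReal.ofReal R}
    have hE : E.Finite := S.I_subfin t x u _ ENNReal.ofReal_ne_top
    let g : ℤ → ℝ := fun z => if z ∈ E then h z + δ else H z
    have hgc : ∀ z, c ≤ g z := by
      intro z
      have := hch z
      by_cases hz : z ∈ E
      · simp only [g, hz, if_true]; linarith
      · simp only [g, hz, if_false]; exact hcH z
    have hgH : ∀ z, g z ≤ H z + δ := by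
      intro z
      have := hhH z
      by_cases hz : z ∈ E
      · simp only [g, hz, if_true]; linarith
      · simp only [g, hz, if_false]; linarith
    have hg : S.memBV g := by
      refine S.aux_memBV_of_le hH 1 (|c| + δ) c hgc fun w => ?_
      rw [abs_le]
      have := hgc w
      have := hgH w
      have := neg_abs_le c
      have := le_abs_self (H w)
      have := abs_nonneg c
      have := abs_nonneg (H w)
      constructor <;> linarith
    have h3 : S.lam t x u g < a := by
      refine lt_of_le_of_lt ?_ hδ2
      refine csSup_le (hne.image _) ?_
      rintro _ ⟨z, hz, rfl⟩
      dsimp only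
      by_cases hzE : z ∈ E
      · have := S.aux_le_lam hA hB ht x u z hz
        simp only [g, hzE, if_true]
        linarith
      · have h4 := S.aux_le_lam hA hG ht x u z hz
        have h5 : R ≤ (S.I t x u z).toReal := by
          have h6 : ENNReal.ofReal R < S.I t x u z := not_le.1 hzE
          exact (ENNReal.ofReal_le_iff_le_toReal hz).1 h6.le
        have h7 : C - 2 * L ≤ R := le_max_right _ _
        have h8 := le_abs_self (H z)
        simp only [g, hzE, if_false]
        simp only [G] at h4
        linarith
    have hev : ∀ᶠ n in atTop, ∀ z ∈ E, hfam (εs n) z < h z + δ := by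
      rw [Filter.eventually_all_finite hE]
      intro z _
      exact hε0.eventually ((hptw z).eventually (gt_mem_nhds (by linarith)))
    filter_upwards [hev, (key g hg).eventually (gt_mem_nhds h3)] with n hn1 hn2
    refine lt_of_le_of_lt (S.aux_mono hA hg (hm1 _ (hεs n)) ?_ ht x (us n) (hεs n)) hn2
    intro w
    by_cases hw : w ∈ E
    · simp only [g, hw, if_true]; exact (hn1 w hw).le
    · simp only [g, hw, if_false]; exact hle _ (hεs n) w
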